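/- Let μ be a critical offspring distribution with bounded support and nonzero variance σ², with span d = gcd{k ≥ 1: μ_k > 0}. Then as n → ∞ along integers with P(|T| = n) > 0, P(|T| = n) ∼ d n^{-3/2} / (σ√(2π)), where T is a μ-Galton–Watson tree. -/

import Mathlib

open scoped BigOperators

inductive PlaneTree : Type
  | node : List PlaneTree → PlaneTree

namespace PlaneTree

mutual
def size : PlaneTree → ℕ
  | .node ts => 1 + sizeL ts
def sizeL : List PlaneTree → ℕ
  | [] => 0
  | t :: ts => size t + sizeL ts
end

mutual
/-- The Galton–Watson weight of a finite plane tree: the product over all vertices `u`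
of `μ (number of children of u)`. -/
noncomputable def weight (μ : ℕ → ℝ) : PlaneTree → ℝ
  | .node ts => μ ts.length * weightL μ ts
noncomputable def weightL (μ : ℕ → ℝ) : List PlaneTree → ℝ
  | [] => 1
  | t :: ts => weight μ t * weightL μ ts
end

end PlaneTree

/-- `P(|T| = n)` for a Galton–Watson tree with offspring distribution `μ`. -/
noncomputable def treeProb (μ : ℕ → ℝ) (n : ℕ) : ℝ :=
  ∑' t : PlaneTree, if t.size = n then t.weight μ else 0

/-!
Joining the first `k` trees of a plane forest to a new root is a bijection which multiplies the
weight by `μ k`. The resulting recursion is solved by `m / (m + j) * [x ^ j] φ(x) ^ (m + j)`, where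
`φ` is the generating function of `μ` (Otter–Dwass). Hence `n P(|T| = n) = P(W_n = -1)` for the
random walk `W` with steps `ξ - 1`. Its steps are centred, with variance `σ²` and span `d`, so
`√n P(W_n = -1) → d / (σ√(2π))` along the attainable times by Fourier inversion and dominated
convergence of the rescaled characteristic functions.
-/

open Filter MeasureTheory ProbabilityTheory
open Finset (mul_sum sum_bij sum_congr sum_add_distrib sum_sigma' mem_sigma sum_preimage)
open Finset.HasAntidiagonal
open scoped PowerSeries Real Topology

/-! ### The Otter–Dwass formula -/

theorem coeff_X_mul_derivative {R : Type*} [CommSemiring R] (φ : R⟦X⟧) (j : ℕ) :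
    (PowerSeries.X * d⁄dX R φ).coeff j = j * φ.coeff j := by
  cases j with
  | zero => simp
  | succ j => simp [PowerSeries.coeff_succ_X_mul, PowerSeries.coeff_derivative, mul_comm]

-- Compare coefficients in `X * (φ ^ (n + 1))' = (n + 1) * (X * φ') * φ ^ n`.
theorem natCast_mul_coeff_pow_succ {R : Type*} [CommSemiring R] (φ : R⟦X⟧) (n j : ℕ) :
    j * (φ ^ (n + 1)).coeff j =
      (n + 1) * ∑ p ∈ antidiagonal j, p.1 * φ.coeff p.1 * (φ ^ n).coeff p.2 := by
  have hpow : PowerSeries.X * d⁄dX R (φ ^ (n + 1)) =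
      PowerSeries.C (n + 1 : R) * (PowerSeries.X * d⁄dX R φ * φ ^ n) := by
    rw [PowerSeries.derivative_pow, add_tsub_cancel_right]
    push_cast [map_add, map_natCast, map_one]
    ring
  rw [← coeff_X_mul_derivative, hpow, PowerSeries.coeff_C_mul, PowerSeries.coeff_mul]
  simp only [coeff_X_mul_derivative]

namespace PlaneTree

variable (μ : ℕ → ℝ)

theorem sizeL_append (f g : List PlaneTree) : sizeL (f ++ g) = sizeL f + sizeL g := by
  induction f with
  | nil => simp [sizeL]
  | cons t f ih => simp [sizeL, ih, add_assoc]

theorem weightL_append (f g : List PlaneTree) :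
    weightL μ (f ++ g) = weightL μ f * weightL μ g := by
  induction f with
  | nil => simp [weightL]
  | cons t f ih => simp [weightL, ih, mul_assoc]

theorem size_pos : ∀ t : PlaneTree, 0 < size t
  | node ts => by simp [size]

theorem length_le_sizeL (f : List PlaneTree) : f.length ≤ sizeL f := by
  induction f with
  | nil => simp [sizeL]
  | cons t f ih =>
    have := size_pos t
    simp only [List.length_cons, sizeL]
    lia

/-- The forest obtained from `f` by joining its first `k` trees to a new root, which becomes the
root of the first tree. Deleting the first root of a forest inverts this operation. -/
def graft (k : ℕ) (f : List PlaneTree) : List PlaneTree :=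
  node (f.take k) :: f.drop k

theorem graft_length_append (ts f : List PlaneTree) :
    graft ts.length (ts ++ f) = node ts :: f := by
  simp [graft]

theorem sizeL_graft (k : ℕ) (f : List PlaneTree) : sizeL (graft k f) = sizeL f + 1 := by
  rw [graft, sizeL, size, add_assoc, ← sizeL_append, List.take_append_drop, add_comm]

theorem weightL_graft {k : ℕ} {f : List PlaneTree} (hk : k ≤ f.length) :
    weightL μ (graft k f) = μ k * weightL μ f := by
  rw [graft, weightL, weight, mul_assoc, ← weightL_append, List.take_append_drop,
    List.length_take_of_le hk]

theorem finite_setOf_sizeL_eq (n : ℕ) : {f : List PlaneTree | sizeL f = n}.Finite := by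
  induction n with
  | zero =>
    refine (Set.finite_singleton []).subset fun f (hf : sizeL f = 0) ↦ ?_
    simpa [hf] using length_le_sizeL f
  | succ n ih =>
    refine ((Set.finite_Iic n).image2 graft ih).subset fun f (hf : sizeL f = n + 1) ↦ ?_
    match f with
    | [] => simp [sizeL] at hf
    | node ts :: rest =>
      have hsize : sizeL (ts ++ rest) = n := by
        rwa [← graft_length_append, sizeL_graft, Nat.add_right_cancel_iff] at hf
      have hlength := length_le_sizeL (ts ++ rest)
      rw [List.length_append, hsize] at hlength
      exact ⟨ts.length, by simp; lia, ts ++ rest, hsize, graft_length_append ts rest⟩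

/-- The plane forests with `m` trees and `j` edges. The number of vertices, `m + j`, is
recorded through the number of edges to keep subtractions out of the recursions. -/
noncomputable def forests (m j : ℕ) : Finset (List PlaneTree) :=
  ((finite_setOf_sizeL_eq (m + j)).sep fun f ↦ f.length = m).toFinset

@[simp]
theorem mem_forests {m j : ℕ} {f : List PlaneTree} :
    f ∈ forests m j ↔ f.length = m ∧ sizeL f = m + j := by
  simp [forests, and_comm]

/-- The probability that `m` independent Galton–Watson trees with offspring distribution `μ`
have `j` edges in total. -/
noncomputable def forestProb (m j : ℕ) : ℝ :=
  ∑ f ∈ forests m j, weightL μ f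

theorem forestProb_zero_zero : forestProb μ 0 0 = 1 := by
  have : forests 0 0 = {[]} := by
    ext f
    simp +contextual [sizeL]
  simp [forestProb, this, weightL]

theorem forestProb_zero_succ (j : ℕ) : forestProb μ 0 (j + 1) = 0 := by
  have : forests 0 (j + 1) = ∅ := by
    ext f
    simp +contextual [sizeL]
  simp [forestProb, this]

theorem forestProb_succ (m j : ℕ) :
    forestProb μ (m + 1) j = ∑ p ∈ antidiagonal j, μ p.1 * forestProb μ (m + p.1) p.2 := by
  simp only [forestProb, mul_sum]
  rw [sum_sigma']
  symm
  refine sum_bij (fun p _ ↦ graft p.1.1 p.2) ?_ ?_ ?_ ?_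
  · rintro ⟨⟨k, l⟩, f⟩ hf
    simp only [mem_sigma, mem_antidiagonal, mem_forests] at hf ⊢
    refine ⟨by simp [graft, hf], ?_⟩
    rw [sizeL_graft]
    lia
  · rintro ⟨⟨k, l⟩, f⟩ hf ⟨⟨k', l'⟩, f'⟩ hf' h
    simp only [mem_sigma, mem_antidiagonal, mem_forests] at hf hf'
    simp only [graft, List.cons.injEq, node.injEq] at h
    have hff' : f = f' := by
      rw [← List.take_append_drop k f, h.1, h.2, List.take_append_drop]
    subst hff'
    obtain rfl : k = k' := by lia
    obtain rfl : l = l' := by lia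
    rfl
  · rintro f hf
    rw [mem_forests] at hf
    match f with
    | [] => simp at hf
    | node ts :: rest =>
      have hlength := length_le_sizeL (ts ++ rest)
      rw [← graft_length_append, sizeL_graft] at hf
      simp only [graft_length_append, List.length_cons, List.length_append] at hf hlength
      exact ⟨⟨(ts.length, j - ts.length), ts ++ rest⟩, by simp; lia, graft_length_append ts rest⟩
  · rintro ⟨⟨k, l⟩, f⟩ hf
    simp only [mem_sigma, mem_forests] at hf
    rw [weightL_graft μ (by lia)]

theorem otter_dwass (m j : ℕ) :
    (m + j) * forestProb μ m j = m * (PowerSeries.mk μ ^ (m + j)).coeff j := by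
  induction h : m + j generalizing m j with
  | zero =>
    obtain ⟨rfl, rfl⟩ : m = 0 ∧ j = 0 := by lia
    simp
  | succ n ih =>
    match m, j with
    | 0, 0 => simp
    | 0, j + 1 => simp [forestProb_zero_succ]
    | m + 1, j =>
      obtain rfl : m + j = n := by lia
      obtain hn | hn := Nat.eq_zero_or_pos (m + j)
      · obtain ⟨rfl, rfl⟩ : m = 0 ∧ j = 0 := by lia
        simp [forestProb_succ, forestProb_zero_zero]
      have hderiv := natCast_mul_coeff_pow_succ (PowerSeries.mk μ) (m + j) j
      have hsplit : (m + j) * forestProb μ (m + 1) j =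
          m * (PowerSeries.mk μ ^ (m + j + 1)).coeff j +
            ∑ p ∈ antidiagonal j, p.1 * (PowerSeries.mk μ).coeff p.1 *
              (PowerSeries.mk μ ^ (m + j)).coeff p.2 := by
        rw [forestProb_succ, pow_succ' _ (m + j), PowerSeries.coeff_mul, mul_sum, mul_sum,
          ← sum_add_distrib]
        refine sum_congr rfl fun p hp ↦ ?_
        rw [mem_antidiagonal] at hp
        have hp' : (p.1 + p.2 : ℝ) = j := mod_cast hp
        have := ih (m + p.1) p.2 (by lia)
        push_cast at this
        rw [PowerSeries.coeff_mk]
        linear_combination μ p.1 * this - μ p.1 * forestProb μ (m + p.1) p.2 * hp'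
      have hn' : (m + j : ℝ) ≠ 0 := mod_cast hn.ne'
      apply mul_left_cancel₀ hn'
      push_cast at hderiv ⊢
      linear_combination (m + j + 1 : ℝ) * hsplit - hderiv

theorem treeProb_zero : treeProb μ 0 = 0 := by
  simp [treeProb, (size_pos _).ne']

theorem treeProb_succ_eq_forestProb (j : ℕ) : treeProb μ (j + 1) = forestProb μ 1 j := by
  have hmem (t : PlaneTree) : [t] ∈ forests 1 j ↔ t.size = j + 1 := by
    simp [sizeL, add_comm]
  have hinj : Function.Injective fun t : PlaneTree ↦ [t] := List.singleton_injective
  calc treeProb μ (j + 1)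
      = ∑ t ∈ (forests 1 j).preimage _ hinj.injOn, if t.size = j + 1 then t.weight μ else 0 :=
        tsum_eq_sum fun t ht ↦ if_neg fun h ↦ ht (Finset.mem_preimage.2 ((hmem t).2 h))
    _ = ∑ t ∈ (forests 1 j).preimage _ hinj.injOn, weightL μ [t] := by
        refine sum_congr rfl fun t ht ↦ ?_
        rw [Finset.mem_preimage, hmem] at ht
        rw [if_pos ht, weightL, weightL, mul_one]
    _ = forestProb μ 1 j := by
        refine sum_preimage _ _ hinj.injOn (weightL μ) fun f hf hrange ↦ ?_
        obtain ⟨t, rfl⟩ := List.length_eq_one_iff.1 (mem_forests.1 hf).1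
        exact absurd ⟨t, rfl⟩ hrange

end PlaneTree

/-! ### Lattice distributions -/

theorem measurableSet_lattice (a h : ℝ) : MeasurableSet {x : ℝ | ∃ k : ℤ, x = a + k * h} := by
  rw [Set.ofPred_exists]
  exact .iUnion fun k ↦ measurableSet_singleton (a + k * h)

/-- `ν` is a lattice distribution with span `h`: it is carried by the coset `a + hℤ`, and by no
coset of a coarser lattice. This is the hypothesis on the steps in the local limit theorem; since
`abs_le` quantifies over all real `g`, point masses have no span. -/
structure HasSpan (ν : Measure ℝ) (a h : ℝ) : Prop where
  pos : 0 < h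
  ae_mem : ∀ᵐ x ∂ν, ∃ k : ℤ, x = a + k * h
  abs_le : ∀ b g : ℝ, (∀ᵐ x ∂ν, ∃ k : ℤ, x = b + k * g) → |g| ≤ h

theorem ae_eq_cexp_or_norm_charFun_lt (ν : Measure ℝ) [IsProbabilityMeasure ν] (t : ℝ) :
    (∃ z : ℂ, ∀ᵐ x : ℝ ∂ν, Complex.exp (t * x * Complex.I) = z) ∨ ‖charFun ν t‖ < 1 := by
  have hnorm : ∀ᵐ x : ℝ ∂ν, ‖Complex.exp (t * x * Complex.I)‖ ≤ 1 :=
    .of_forall fun x ↦ mod_cast (Complex.norm_exp_ofReal_mul_I (t * x)).le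
  rw [charFun_apply_real]
  refine (ae_eq_const_or_norm_integral_lt_of_norm_le_const hnorm).imp (fun h ↦ ⟨_, h⟩) fun h ↦ ?_
  simpa using h

theorem HasSpan.norm_charFun_lt_one {ν : Measure ℝ} [IsProbabilityMeasure ν] {a h t : ℝ}
    (hν : HasSpan ν a h) (ht0 : t ≠ 0) (ht : |t| < 2 * π / h) : ‖charFun ν t‖ < 1 := by
  refine (ae_eq_cexp_or_norm_charFun_lt ν t).resolve_left fun ⟨z, hz⟩ ↦ ?_
  obtain ⟨b, hb⟩ := hz.exists
  have hlattice : ∀ᵐ x ∂ν, ∃ k : ℤ, x = b + k * (2 * π / t) := by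
    filter_upwards [hz] with x hx
    obtain ⟨k, hk⟩ := Complex.exp_eq_exp_iff_exists_int.1 (hx.trans hb.symm)
    have hk' : t * x = t * b + k * (2 * π) := by
      apply Complex.ofReal_injective
      apply mul_right_cancel₀ Complex.I_ne_zero
      push_cast
      linear_combination hk
    exact ⟨k, by field_simp; linear_combination hk'⟩
  have hspan := hν.abs_le b _ hlattice
  rw [abs_div, abs_of_pos Real.two_pi_pos, div_le_iff₀ (abs_pos.2 ht0)] at hspan
  rw [lt_div_iff₀ hν.pos] at ht
  linarith

theorem eventually_norm_charFun_le_exp {ν : Measure ℝ} [IsProbabilityMeasure ν]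
    (h0 : ∫ x, x ∂ν = 0) (h1 : ∫ x, x ^ 2 ∂ν = 1) :
    ∀ᶠ t in 𝓝 (0 : ℝ), ‖charFun ν t‖ ≤ Real.exp (-(1 / 4) * t ^ 2) := by
  have htaylor := taylor_charFun_two (P := ν) (X := id) aemeasurable_id h0 h1
  rw [Measure.map_id] at htaylor
  have hsmall : ∀ᶠ t in 𝓝 (0 : ℝ), |t| < 1 := by
    simpa [Metric.ball, Filter.Eventually] using Metric.ball_mem_nhds (0 : ℝ) one_pos
  filter_upwards [htaylor.bound (c := 1 / 4) (by norm_num), hsmall] with t ht ht1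
  have hnorm : ‖(1 - (t : ℂ) ^ 2 / 2)‖ = 1 - t ^ 2 / 2 := by
    have : (0 : ℝ) ≤ 1 - t ^ 2 / 2 := by nlinarith [abs_lt.1 ht1]
    rw [← Complex.norm_of_nonneg this]
    push_cast
    rfl
  calc ‖charFun ν t‖
      ≤ ‖(1 - (t : ℂ) ^ 2 / 2)‖ + ‖charFun ν t - (1 - (t : ℂ) ^ 2 / 2)‖ := norm_le_insert' _ _
    _ ≤ -(1 / 4) * t ^ 2 + 1 := by
        rw [hnorm]
        rw [Real.norm_of_nonneg (sq_nonneg t)] at ht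
        linarith
    _ ≤ Real.exp (-(1 / 4) * t ^ 2) := Real.add_one_le_exp _

theorem exists_norm_charFun_le_exp_neg_mul_sq {ν : Measure ℝ} [IsProbabilityMeasure ν]
    (h0 : ∫ x, x ∂ν = 0) (h1 : ∫ x, x ^ 2 ∂ν = 1) {T : ℝ}
    (hT : ∀ t, t ≠ 0 → |t| ≤ T → ‖charFun ν t‖ < 1) :
    ∃ c > 0, ∀ t, |t| ≤ T → ‖charFun ν t‖ ≤ Real.exp (-c * t ^ 2) := by
  obtain ⟨δ, hδ, hnear⟩ := Metric.eventually_nhds_iff.1 (eventually_norm_charFun_le_exp h0 h1)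
  have hcompact : IsCompact {t : ℝ | |t| ≤ T ∧ δ ≤ |t|} := by
    refine (isCompact_Icc (a := -T) (b := T)).of_isClosed_subset ?_ fun t ht ↦ abs_le.1 ht.1
    exact (isClosed_le continuous_abs continuous_const).inter
      (isClosed_le continuous_const continuous_abs)
  obtain ⟨m, hm, hfar⟩ := hcompact.exists_forall_le' (f := fun t ↦ 1 - ‖charFun ν t‖)
    (by fun_prop) (a := 0) fun t ht ↦ sub_pos.2 (hT t (abs_pos.1 (hδ.trans_le ht.2)) ht.1)
  refine ⟨min (1 / 4) (m / (T ^ 2 + 1)), by positivity, fun t ht ↦ ?_⟩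
  have hmono {c : ℝ} (hc : min (1 / 4) (m / (T ^ 2 + 1)) ≤ c) :
      Real.exp (-c * t ^ 2) ≤ Real.exp (-min (1 / 4) (m / (T ^ 2 + 1)) * t ^ 2) := by
    gcongr
  obtain htδ | htδ := lt_or_ge |t| δ
  · exact (hnear (by simpa using htδ)).trans (hmono (min_le_left _ _))
  · have hmt : m / (T ^ 2 + 1) * t ^ 2 ≤ m := by
      rw [div_mul_eq_mul_div, div_le_iff₀ (by positivity)]
      have : t ^ 2 ≤ T ^ 2 := sq_le_sq.2 (ht.trans (le_abs_self T))
      gcongr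
      linarith
    calc ‖charFun ν t‖
        ≤ -(m / (T ^ 2 + 1)) * t ^ 2 + 1 := by linarith [hfar t ⟨ht, htδ⟩]
      _ ≤ Real.exp (-(m / (T ^ 2 + 1)) * t ^ 2) := Real.add_one_le_exp _
      _ ≤ _ := hmono (min_le_right _ _)

theorem intervalIntegral_cexp_int_mul_mul_I {h : ℝ} (hh : 0 < h) (k : ℤ) :
    ∫ t in -(π / h)..π / h, Complex.exp (k * h * Complex.I * t) =
      if k = 0 then (2 * π / h : ℂ) else 0 := by
  split_ifs with hk
  · simp only [hk, Int.cast_zero, zero_mul, Complex.exp_zero, intervalIntegral.integral_const,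
      Complex.real_smul, mul_one]
    push_cast
    ring
  · have hne : (k * h * Complex.I : ℂ) ≠ 0 := by simp [hk, hh.ne']
    have hperiod : Complex.exp (k * h * Complex.I * (π / h : ℝ)) =
        Complex.exp (k * h * Complex.I * (-(π / h) : ℝ)) := by
      refine Complex.exp_eq_exp_iff_exists_int.2 ⟨k, ?_⟩
      have : (h : ℂ) ≠ 0 := mod_cast hh.ne'
      push_cast
      field_simp
      ring
    rw [integral_exp_mul_complex hne, hperiod, sub_self, zero_div]

theorem intervalIntegral_charFun_of_lattice {ν : Measure ℝ} [IsFiniteMeasure ν] {y h : ℝ}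
    (hh : 0 < h) (hν : ∀ᵐ x ∂ν, ∃ k : ℤ, x = y + k * h) :
    ∫ t in -(π / h)..π / h, Complex.exp (-(t * y * Complex.I)) * charFun ν t =
      2 * π / h * ν.real {y} := by
  have : IsFiniteMeasure (volume.restrict (Set.uIoc (-(π / h)) (π / h))) :=
    ⟨by simp [Set.uIoc]⟩
  have hint : Integrable (Function.uncurry fun t x : ℝ ↦
      Complex.exp (-(t * y * Complex.I)) * Complex.exp (t * x * Complex.I))
      ((volume.restrict (Set.uIoc (-(π / h)) (π / h))).prod ν) := by
    refine .of_bound (by fun_prop) 1 (.of_forall fun ⟨t, x⟩ ↦ ?_)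
    simp [Complex.norm_exp]
  have hinner : ∀ᵐ x : ℝ ∂ν, ∫ t : ℝ in -(π / h)..π / h,
      Complex.exp (-(t * y * Complex.I)) * Complex.exp (t * x * Complex.I) =
        Set.indicator {y} (fun _ ↦ (2 * π / h : ℂ)) x := by
    filter_upwards [hν] with x ⟨k, hk⟩
    have hcongr (t : ℝ) : Complex.exp (-(t * y * Complex.I)) * Complex.exp (t * x * Complex.I) =
        Complex.exp (k * h * Complex.I * t) := by
      rw [hk, ← Complex.exp_add]
      push_cast
      ring_nf
    simp only [hcongr, intervalIntegral_cexp_int_mul_mul_I hh]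
    simp [Set.indicator_apply, hk, hh.ne']
  simp only [charFun_apply_real, ← integral_const_mul]
  rw [intervalIntegral_integral_swap hint, integral_congr_ae hinner,
    integral_indicator_const _ (measurableSet_singleton y), Complex.real_smul, mul_comm]

theorem integral_cexp_mul_exp_neg_sq_div_two (y : ℝ) :
    ∫ t : ℝ, Complex.exp (-(t * y * Complex.I)) * Complex.exp (-t ^ 2 / 2) =
      2 * π * gaussianPDFReal 0 1 y := by
  have hsqrt : (π / (1 / 2) : ℂ) ^ (1 / 2 : ℂ) = √(2 * π) := by
    rw [Real.sqrt_eq_rpow, Complex.ofReal_cpow Real.two_pi_pos.le]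
    push_cast
    ring_nf
  have hpdf : 2 * π * gaussianPDFReal 0 1 y = √(2 * π) * Real.exp (-y ^ 2 / 2) := by
    rw [gaussianPDFReal, NNReal.coe_one, mul_one, mul_one, sub_zero, ← mul_assoc,
      ← div_eq_mul_inv, Real.div_sqrt]
  calc ∫ t : ℝ, Complex.exp (-(t * y * Complex.I)) * Complex.exp (-t ^ 2 / 2)
      = ∫ t : ℝ, Complex.exp (Complex.I * -y * t) * Complex.exp (-(1 / 2) * t ^ 2) := by
        congr! 3 <;> ring_nf
    _ = √(2 * π) * Complex.exp (-y ^ 2 / 2) := by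
        rw [fourierIntegral_gaussian (by norm_num) (-y), hsqrt]
        ring_nf
    _ = 2 * π * gaussianPDFReal 0 1 y := mod_cast hpdf.symm

/-! ### The local limit theorem -/

theorem integrable_exp_neg_sq_div_two : Integrable fun t : ℝ ↦ Real.exp (-t ^ 2 / 2) := by
  simpa [neg_div, div_eq_inv_mul] using integrable_exp_neg_mul_sq (b := 1 / 2) (by norm_num)

theorem abs_real_singleton_div_sub_gaussianPDFReal_le {ν : Measure ℝ} [IsFiniteMeasure ν] {y h : ℝ}
    (hh : 0 < h) (hν : ∀ᵐ x ∂ν, ∃ k : ℤ, x = y + k * h) :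
    |ν.real {y} / h - gaussianPDFReal 0 1 y| ≤ (2 * π)⁻¹ *
      ∫ t : ℝ, ‖(Set.Ioc (-(π / h)) (π / h)).indicator (charFun ν) t -
        Complex.exp (-t ^ 2 / 2)‖ := by
  set I := Set.Ioc (-(π / h)) (π / h)
  set e : ℝ → ℂ := fun t ↦ Complex.exp (-(t * y * Complex.I))
  have he (t : ℝ) : ‖e t‖ = 1 := by simp [e, Complex.norm_exp]
  have hν_int : Integrable (I.indicator (charFun ν)) :=
    continuous_charFun.integrableOn_Ioc.integrable_indicator measurableSet_Ioc
  have he_mul {f : ℝ → ℂ} (hf : Integrable f) : Integrable fun t ↦ e t * f t :=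
    hf.bdd_mul (c := 1) (by fun_prop) (.of_forall fun t ↦ (he t).le)
  have hgauss_int : Integrable fun t : ℝ ↦ Complex.exp (-t ^ 2 / 2) :=
    mod_cast integrable_exp_neg_sq_div_two.ofReal (𝕜 := ℂ)
  have hdiff : ((ν.real {y} / h - gaussianPDFReal 0 1 y : ℝ) : ℂ) = (2 * π)⁻¹ *
      ∫ t : ℝ, e t * (I.indicator (charFun ν) t - Complex.exp (-t ^ 2 / 2)) := by
    have hinv : ∫ t, e t * I.indicator (charFun ν) t = 2 * π / h * ν.real {y} := by
      rw [← intervalIntegral_charFun_of_lattice hh hν,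
        intervalIntegral.integral_of_le (by linarith [div_pos Real.pi_pos hh]),
        ← integral_indicator measurableSet_Ioc]
      simp only [Set.indicator_apply, mul_ite, mul_zero, I, e]
    have hπ : (π : ℂ) ≠ 0 := mod_cast Real.pi_ne_zero
    simp only [mul_sub]
    rw [integral_sub (he_mul hν_int) (he_mul hgauss_int), hinv,
      integral_cexp_mul_exp_neg_sq_div_two]
    push_cast
    field_simp
  calc |ν.real {y} / h - gaussianPDFReal 0 1 y|
      = (2 * π)⁻¹ * ‖∫ t : ℝ, e t * (I.indicator (charFun ν) t - Complex.exp (-t ^ 2 / 2))‖ := by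
        rw [← Real.norm_eq_abs, ← Complex.norm_real, hdiff, norm_mul, Complex.norm_real,
          Real.norm_of_nonneg (by positivity)]
    _ ≤ (2 * π)⁻¹ * ∫ t : ℝ, ‖I.indicator (charFun ν) t - Complex.exp (-t ^ 2 / 2)‖ := by
        gcongr
        refine (norm_integral_le_integral_norm _).trans_eq ?_
        simp only [norm_mul, he, one_mul]

theorem norm_indicator_pow_le_exp {f : ℝ → ℂ} {c T : ℝ}
    (hf : ∀ t, |t| ≤ T → ‖f t‖ ≤ Real.exp (-c * t ^ 2)) (hT0 : 0 < T) (n : ℕ) (t : ℝ) :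
    ‖(Set.Ioc (-(√n * T)) (√n * T)).indicator (fun t ↦ f ((√n)⁻¹ * t) ^ n) t‖ ≤
      Real.exp (-c * t ^ 2) := by
  by_cases ht : t ∈ Set.Ioc (-(√n * T)) (√n * T)
  · have hsqrt : 0 < √(n : ℝ) := pos_of_mul_pos_left (by linarith [ht.1, ht.2]) hT0.le
    have hn : (n : ℝ) ≠ 0 := (Real.sqrt_pos.1 hsqrt).ne'
    have htT : |(√n)⁻¹ * t| ≤ T := by
      rw [abs_mul, abs_inv, abs_of_pos hsqrt, inv_mul_le_iff₀ hsqrt]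
      exact abs_le.2 ⟨ht.1.le, ht.2⟩
    rw [Set.indicator_of_mem ht, norm_pow]
    calc ‖f ((√n)⁻¹ * t)‖ ^ n
        ≤ Real.exp (-c * ((√n)⁻¹ * t) ^ 2) ^ n := by gcongr; exact hf _ htT
      _ = Real.exp (-c * t ^ 2) := by
        rw [← Real.exp_nat_mul, mul_pow, inv_pow, Real.sq_sqrt n.cast_nonneg]
        field_simp
  · rw [Set.indicator_of_notMem ht, norm_zero]
    positivity

theorem tendsto_indicator_charFun_pow {ν : Measure ℝ} [IsProbabilityMeasure ν]
    (h0 : ∫ x, x ∂ν = 0) (h1 : ∫ x, x ^ 2 ∂ν = 1) {T : ℝ} (hT0 : 0 < T) (t : ℝ) :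
    Tendsto (fun n : ℕ ↦ (Set.Ioc (-(√n * T)) (√n * T)).indicator
      (fun t ↦ charFun ν ((√n)⁻¹ * t) ^ n) t) atTop (𝓝 (Complex.exp (-t ^ 2 / 2))) := by
  have hsqrt : Tendsto (fun n : ℕ ↦ √n * T) atTop atTop :=
    (Real.tendsto_sqrt_atTop.comp tendsto_natCast_atTop_atTop).atTop_mul_const hT0
  have hclt := tendsto_charFun_inv_sqrt_mul_pow (P := ν) (X := id) aemeasurable_id h0 h1 t
  rw [Measure.map_id] at hclt
  refine hclt.congr' ?_
  filter_upwards [hsqrt.eventually_gt_atTop |t|] with n hn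
  have ht : t ∈ Set.Ioc (-(√n * T)) (√n * T) := ⟨(abs_lt.1 hn).1, (abs_lt.1 hn).2.le⟩
  rw [Set.indicator_of_mem ht]

theorem tendsto_integral_norm_charFun_pow_sub {ν : Measure ℝ} [IsProbabilityMeasure ν]
    (h0 : ∫ x, x ∂ν = 0) (h1 : ∫ x, x ^ 2 ∂ν = 1) {T : ℝ} (hT0 : 0 < T)
    (hT : ∀ t, t ≠ 0 → |t| ≤ T → ‖charFun ν t‖ < 1) :
    Tendsto (fun n : ℕ ↦ ∫ t : ℝ, ‖(Set.Ioc (-(√n * T)) (√n * T)).indicator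
      (fun t ↦ charFun ν ((√n)⁻¹ * t) ^ n) t - Complex.exp (-t ^ 2 / 2)‖) atTop (𝓝 0) := by
  obtain ⟨c, hc, hbound⟩ := exists_norm_charFun_le_exp_neg_mul_sq h0 h1 hT
  rw [← integral_zero ℝ ℝ (μ := volume)]
  refine tendsto_integral_of_dominated_convergence
    (fun t ↦ Real.exp (-c * t ^ 2) + Real.exp (-t ^ 2 / 2)) (fun n ↦ ?_)
    ((integrable_exp_neg_mul_sq hc).add integrable_exp_neg_sq_div_two)
    (fun n ↦ .of_forall fun t ↦ ?_) (.of_forall fun t ↦ ?_)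
  · have hmeas : Measurable fun t ↦ charFun ν ((√n)⁻¹ * t) ^ n := by fun_prop
    exact ((hmeas.indicator measurableSet_Ioc).sub (by fun_prop)).norm.aestronglyMeasurable
  · have hgauss : ‖Complex.exp (-t ^ 2 / 2)‖ = Real.exp (-t ^ 2 / 2) := by
      rw [← Complex.norm_exp_ofReal]
      push_cast
      rfl
    rw [norm_norm, ← hgauss]
    exact (norm_sub_le _ _).trans (by gcongr; exact norm_indicator_pow_le_exp hbound hT0 n t)
  · have hlim := tendsto_indicator_charFun_pow h0 h1 hT0 t
    simpa only [norm_zero] using (tendsto_sub_nhds_zero_iff.2 hlim).norm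

section LocalLimitTheorem

variable {Ω : Type*} [MeasurableSpace Ω] {P : Measure Ω} {X : ℕ → Ω → ℝ} {a h : ℝ}

theorem HasSpan.ae_sum_mem (hspan : HasSpan (P.map (X 0)) a h)
    (hident : ∀ i, IdentDistrib (X i) (X 0) P P) (n : ℕ) :
    ∀ᵐ ω ∂P, ∃ k : ℤ, ∑ i ∈ Finset.range n, X i ω = n * a + k * h := by
  have hmem (i : ℕ) : ∀ᵐ ω ∂P, ∃ k : ℤ, X i ω = a + k * h := by
    refine ae_of_ae_map (p := fun x ↦ ∃ k : ℤ, x = a + k * h) (hident i).aemeasurable_fst ?_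
    rw [(hident i).map_eq]
    exact hspan.ae_mem
  filter_upwards [ae_all_iff.2 hmem] with ω hω
  choose k hk using hω
  exact ⟨∑ i ∈ Finset.range n, k i, by simp [hk, sum_add_distrib, Finset.sum_mul]⟩

variable [IsProbabilityMeasure P]

theorem abs_real_sum_sub_gaussianPDFReal_le (hindep : iIndepFun X P)
    (hident : ∀ i, IdentDistrib (X i) (X 0) P P) (hspan : HasSpan (P.map (X 0)) a h)
    {n : ℕ} (hn : 0 < n) (k : ℤ) :
    |√n / h * P.real {ω | ∑ i ∈ Finset.range n, X i ω = n * a + k * h} -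
        gaussianPDFReal 0 1 ((√n)⁻¹ * (n * a + k * h))| ≤ (2 * π)⁻¹ *
      ∫ t : ℝ, ‖(Set.Ioc (-(√n * (π / h))) (√n * (π / h))).indicator
        (fun t ↦ charFun (P.map (X 0)) ((√n)⁻¹ * t) ^ n) t - Complex.exp (-t ^ 2 / 2)‖ := by
  have hsqrt : 0 < √(n : ℝ) := by positivity
  set x : ℝ := n * a + k * h
  set W : Ω → ℝ := fun ω ↦ (√n)⁻¹ * ∑ i ∈ Finset.range n, X i ω
  have hW : AEMeasurable W P := by
    have := fun i ↦ (hident i).aemeasurable_fst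
    fun_prop
  have hlattice : ∀ᵐ w ∂(P.map W), ∃ l : ℤ, w = (√n)⁻¹ * x + l * ((√n)⁻¹ * h) := by
    rw [ae_map_iff hW (measurableSet_lattice _ _)]
    filter_upwards [hspan.ae_sum_mem hident n] with ω ⟨l, hl⟩
    exact ⟨l - k, by simp only [W, x, hl]; push_cast; ring⟩
  have hreal : (P.map W).real {(√n)⁻¹ * x} =
      P.real {ω | ∑ i ∈ Finset.range n, X i ω = x} := by
    rw [map_measureReal_apply_of_aemeasurable hW (measurableSet_singleton _)]
    congr 1 with ω
    simp [W, hsqrt.ne']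
  have hbound := abs_real_singleton_div_sub_gaussianPDFReal_le
    (mul_pos (inv_pos.2 hsqrt) hspan.pos) hlattice
  have hchar (t : ℝ) : charFun (P.map W) t = charFun (P.map (X 0)) ((√n)⁻¹ * t) ^ n :=
    charFun_inv_sqrt_mul_sum hindep hident
  have hT : π / ((√n)⁻¹ * h) = √n * (π / h) := by field_simp
  have hdiv (p : ℝ) : p / ((√n)⁻¹ * h) = √n / h * p := by field_simp
  rwa [hreal, hdiv, hT, funext hchar] at hbound

theorem gnedenko_local_limit (h0 : P[X 0] = 0) (h1 : P[X 0 ^ 2] = 1)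
    (hindep : iIndepFun X P) (hident : ∀ i, IdentDistrib (X i) (X 0) P P)
    (hspan : HasSpan (P.map (X 0)) a h) {ε : ℝ} (hε : 0 < ε) :
    ∀ᶠ n : ℕ in atTop, ∀ k : ℤ,
      |√n / h * P.real {ω | ∑ i ∈ Finset.range n, X i ω = n * a + k * h} -
        gaussianPDFReal 0 1 ((√n)⁻¹ * (n * a + k * h))| < ε := by
  have hX := (hident 0).aemeasurable_fst
  have : IsProbabilityMeasure (P.map (X 0)) := Measure.isProbabilityMeasure_map hX
  have hL1 := tendsto_integral_norm_charFun_pow_sub (ν := P.map (X 0)) (T := π / h)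
    (by rwa [integral_map hX (by fun_prop)]) (by rwa [integral_map hX (by fun_prop)])
    (div_pos Real.pi_pos hspan.pos) fun t ht htT ↦ hspan.norm_charFun_lt_one ht
      (htT.trans_lt (by have := hspan.pos; gcongr; linarith [Real.pi_pos]))
  filter_upwards [eventually_gt_atTop 0,
    hL1.eventually_lt_const (mul_pos Real.two_pi_pos hε)] with n hn hL1n k
  exact (abs_real_sum_sub_gaussianPDFReal_le hindep hident hspan hn k).trans_lt
    ((inv_mul_lt_iff₀ Real.two_pi_pos).2 hL1n)

theorem tendsto_sqrt_div_mul_real_sum_eq (h0 : P[X 0] = 0) (h1 : P[X 0 ^ 2] = 1)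
    (hindep : iIndepFun X P) (hident : ∀ i, IdentDistrib (X i) (X 0) P P)
    (hspan : HasSpan (P.map (X 0)) a h) (x : ℝ) :
    Tendsto (fun n : ℕ ↦ √n / h * P.real {ω | ∑ i ∈ Finset.range n, X i ω = x})
      (atTop ⊓ 𝓟 {n | P.real {ω | ∑ i ∈ Finset.range n, X i ω = x} ≠ 0})
      (𝓝 (√(2 * π))⁻¹) := by
  have hgauss : Tendsto (fun n : ℕ ↦ gaussianPDFReal 0 1 ((√n)⁻¹ * x)) atTop
      (𝓝 (√(2 * π))⁻¹) := by
    have harg : Tendsto (fun n : ℕ ↦ (√n)⁻¹ * x) atTop (𝓝 0) := by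
      simpa using (Real.tendsto_sqrt_atTop.comp
        tendsto_natCast_atTop_atTop).inv_tendsto_atTop.mul_const x
    have hcont : Continuous (gaussianPDFReal 0 1) := by
      rw [gaussianPDFReal_def]
      fun_prop
    have hzero : gaussianPDFReal 0 1 0 = (√(2 * π))⁻¹ := by simp [gaussianPDFReal]
    exact hzero ▸ (hcont.tendsto 0).comp harg
  refine (hgauss.mono_left inf_le_left).congr_dist ?_
  rw [Metric.tendsto_nhds]
  intro ε hε
  rw [eventually_inf_principal]
  filter_upwards [gnedenko_local_limit h0 h1 hindep hident hspan hε]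
    with n hn hne
  have hfreq : ∃ᵐ ω ∂P, ∑ i ∈ Finset.range n, X i ω = x :=
    frequently_ae_iff.2 ((measureReal_ne_zero_iff (by finiteness)).1 hne)
  obtain ⟨ω, hω, k, hk⟩ := (hfreq.and_eventually (hspan.ae_sum_mem hident n)).exists
  have := hn k
  rw [← hk, hω] at this
  rwa [dist_zero_right, Real.norm_of_nonneg dist_nonneg, dist_comm, Real.dist_eq]

end LocalLimitTheorem

/-! ### The Łukasiewicz walk -/

/-- The offspring distribution with weights `μ` as a measure on `ℕ`, for use with the probability
library. Negative weights would be truncated to `0` by `ENNReal.ofReal`. -/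
noncomputable def offspringLaw (μ : ℕ → ℝ) : Measure ℕ :=
  Measure.sum fun k ↦ ENNReal.ofReal (μ k) • Measure.dirac k

section OffspringLaw

variable {μ : ℕ → ℝ}

theorem offspringLaw_singleton (μ : ℕ → ℝ) (k : ℕ) :
    offspringLaw μ {k} = ENNReal.ofReal (μ k) := by
  simp [offspringLaw, Measure.sum_apply, Set.indicator_apply]

theorem offspringLaw_real_singleton (hμ0 : ∀ k, 0 ≤ μ k) (k : ℕ) :
    (offspringLaw μ).real {k} = μ k := by
  rw [measureReal_def, offspringLaw_singleton, ENNReal.toReal_ofReal (hμ0 k)]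

theorem ae_offspringLaw_iff (hμ0 : ∀ k, 0 ≤ μ k) {p : ℕ → Prop} :
    (∀ᵐ k ∂offspringLaw μ, p k) ↔ ∀ k, μ k ≠ 0 → p k := by
  rw [ae_iff_of_countable]
  simp only [offspringLaw_singleton, ne_eq, ENNReal.ofReal_eq_zero, (hμ0 _).ge_iff_eq']

theorem isProbabilityMeasure_offspringLaw (hμ0 : ∀ k, 0 ≤ μ k) (hμ1 : HasSum μ 1) :
    IsProbabilityMeasure (offspringLaw μ) where
  measure_univ := by
    rw [offspringLaw, Measure.sum_apply _ .univ]
    simp [← ENNReal.ofReal_tsum_of_nonneg hμ0 hμ1.summable, hμ1.tsum_eq]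

theorem integral_offspringLaw (hμ0 : ∀ k, 0 ≤ μ k) {f : ℕ → ℝ} {s : ℝ}
    (hf : HasSum (fun k ↦ f k * μ k) s) : ∫ k, f k ∂offspringLaw μ = s := by
  rw [offspringLaw, integral_sum_dirac fun _ ↦ ENNReal.ofReal_ne_top, ← hf.tsum_eq]
  simp only [ENNReal.toReal_ofReal (hμ0 _), smul_eq_mul, mul_comm]

end OffspringLaw

section RandomWalk

variable {Ω : Type*} [MeasurableSpace Ω] {P : Measure Ω} [IsProbabilityMeasure P] {μ : ℕ → ℝ}
  {ξ : ℕ → Ω → ℕ}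

theorem real_sum_eq_coeff_pow (hξ : ∀ i, Measurable (ξ i)) (hindep : iIndepFun ξ P)
    (hlaw : ∀ i k, P.real {ω | ξ i ω = k} = μ k) (n j : ℕ) :
    P.real {ω | ∑ i ∈ Finset.range n, ξ i ω = j} = (PowerSeries.mk μ ^ n).coeff j := by
  induction n generalizing j with
  | zero => by_cases hj : j = 0 <;> simp [hj, eq_comm, PowerSeries.coeff_one]
  | succ n ih =>
    have hunion : {ω | ∑ i ∈ Finset.range (n + 1), ξ i ω = j} = ⋃ p ∈ antidiagonal j,
        {ω | ∑ i ∈ Finset.range n, ξ i ω = p.1} ∩ {ω | ξ n ω = p.2} := by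
      ext ω
      simp [Finset.sum_range_succ]
    have hsum : Measurable fun ω ↦ ∑ i ∈ Finset.range n, ξ i ω := by fun_prop
    have hmul (p : ℕ × ℕ) :
        P.real ({ω | ∑ i ∈ Finset.range n, ξ i ω = p.1} ∩ {ω | ξ n ω = p.2}) =
          P.real {ω | ∑ i ∈ Finset.range n, ξ i ω = p.1} * P.real {ω | ξ n ω = p.2} := by
      have := (hindep.indepFun_sum_range_succ hξ n).measure_inter_preimage_eq_mul {p.1} {p.2}
        (measurableSet_singleton _) (measurableSet_singleton _)
      simpa [Set.preimage, measureReal_def] using congr_arg ENNReal.toReal this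
    rw [hunion, measureReal_biUnion_finset, pow_succ, PowerSeries.coeff_mul]
    · simp only [hmul, ih, hlaw, PowerSeries.coeff_mk]
    · refine fun p _ q _ hpq ↦ Set.disjoint_left.2 fun ω hp hq ↦ hpq ?_
      exact Prod.ext (hp.1.symm.trans hq.1) (hp.2.symm.trans hq.2)
    · exact fun p _ ↦
        (hsum (measurableSet_singleton p.1)).inter (hξ n (measurableSet_singleton p.2))

theorem natCast_mul_treeProb (hξ : ∀ i, Measurable (ξ i)) (hindep : iIndepFun ξ P)
    (hlaw : ∀ i k, P.real {ω | ξ i ω = k} = μ k) (n : ℕ) :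
    n * treeProb μ n = P.real {ω | ∑ i ∈ Finset.range n, ξ i ω + 1 = n} := by
  cases n with
  | zero => simp
  | succ j =>
    have := PlaneTree.otter_dwass μ 1 j
    simp only [Nat.add_right_cancel_iff, real_sum_eq_coeff_pow hξ hindep hlaw]
    rw [PlaneTree.treeProb_succ_eq_forestProb]
    push_cast at this ⊢
    rw [add_comm j 1]
    linear_combination this

end RandomWalk

theorem exists_int_mul_eq_of_forall_dvd {p : ℕ → Prop} {d : ℕ}
    (hd : ∀ e : ℕ, (∀ k, p k → e ∣ k) → e ∣ d) {g : ℝ}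
    (hg : ∀ k : ℕ, p k → ∃ m : ℤ, m * g = k) : ∃ m : ℤ, m * g = d := by
  obtain ⟨e, he⟩ := Int.subgroup_cyclic ((AddSubgroup.zmultiples g).comap (Int.castAddHom ℝ))
  have hmem (k : ℕ) : (∃ m : ℤ, m * g = k) ↔ e.natAbs ∣ k := by
    have := AddSubgroup.ext_iff.1 he k
    rw [← AddSubgroup.zmultiples_eq_closure, Int.mem_zmultiples_iff, Int.dvd_natCast] at this
    simpa [AddSubgroup.mem_zmultiples_iff] using this
  simp only [hmem] at hg ⊢
  exact hd e.natAbs hg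

theorem hasSpan_map_offspringLaw {μ : ℕ → ℝ} (hμ0 : ∀ k, 0 ≤ μ k) (h0 : μ 0 ≠ 0) {d : ℕ}
    (hd_pos : 0 < d) (hd_div : ∀ k, 1 ≤ k → μ k ≠ 0 → d ∣ k)
    (hd_gcd : ∀ e : ℕ, (∀ k, 1 ≤ k → μ k ≠ 0 → e ∣ k) → e ∣ d) {s : ℝ} (hs : 0 < s) :
    HasSpan ((offspringLaw μ).map fun k : ℕ ↦ ((k : ℝ) - 1) / s) (-1 / s) (d / s) where
  pos := by positivity
  ae_mem := by
    rw [ae_map_iff (by fun_prop) (measurableSet_lattice _ _), ae_offspringLaw_iff hμ0]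
    intro k hk
    have hdk : d ∣ k := k.eq_zero_or_pos.elim (fun h ↦ h ▸ dvd_zero d) fun h ↦ hd_div k h hk
    obtain ⟨m, rfl⟩ := hdk
    exact ⟨m, by push_cast; ring⟩
  abs_le b g hbg := by
    rw [ae_map_iff (by fun_prop) (measurableSet_lattice _ _), ae_offspringLaw_iff hμ0] at hbg
    obtain ⟨m₀, hm₀⟩ := hbg 0 h0
    have hmul (k : ℕ) (hk : 1 ≤ k ∧ μ k ≠ 0) : ∃ m : ℤ, m * (g * s) = k := by
      obtain ⟨m, hm⟩ := hbg k hk.2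
      refine ⟨m - m₀, ?_⟩
      field_simp at hm hm₀
      push_cast at hm₀ ⊢
      linear_combination hm₀ - hm
    obtain ⟨m, hm⟩ := exists_int_mul_eq_of_forall_dvd (by simpa only [and_imp] using hd_gcd) hmul
    have hm0 : m ≠ 0 := by
      rintro rfl
      rw [Int.cast_zero, zero_mul] at hm
      exact hd_pos.ne (mod_cast hm)
    have hm1 : (1 : ℝ) ≤ |(m : ℝ)| := mod_cast Int.one_le_abs hm0
    rw [le_div_iff₀ hs]
    calc |g| * s
        ≤ |(m : ℝ)| * (|g| * s) := le_mul_of_one_le_left (by positivity) hm1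
      _ = |m * (g * s)| := by rw [abs_mul, abs_mul, abs_of_pos hs]
      _ = d := by rw [hm, Nat.abs_cast]

section Criticality

variable {μ : ℕ → ℝ} {σ2 : ℝ}

theorem apply_zero_ne_zero_of_critical (hμ0 : ∀ k, 0 ≤ μ k) (hμ1 : HasSum μ 1)
    (hmean : HasSum (fun k : ℕ ↦ k * μ k) 1)
    (hvar : HasSum (fun k : ℕ ↦ (k : ℝ) ^ 2 * μ k) (σ2 + 1)) (hσ : 0 < σ2) : μ 0 ≠ 0 := by
  intro h0
  have hnonneg (k : ℕ) : 0 ≤ (k : ℝ) * μ k - μ k := by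
    cases k with
    | zero => simp [h0]
    | succ k =>
      have := mul_nonneg k.cast_nonneg (hμ0 (k + 1))
      push_cast
      linarith
  have hsum : HasSum (fun k : ℕ ↦ (k : ℝ) * μ k - μ k) 0 := by simpa using hmean.sub hμ1
  have hzero (k : ℕ) : (k : ℝ) * μ k - μ k = 0 :=
    congr_fun ((hasSum_zero_iff_of_nonneg hnonneg).1 hsum) k
  have hsq : HasSum (fun k : ℕ ↦ (k : ℝ) ^ 2 * μ k) 1 := by
    exact hmean.congr_fun fun k ↦ by linear_combination k * hzero k
  linarith [hvar.unique hsq]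

theorem integral_standardized_offspringLaw (hμ0 : ∀ k, 0 ≤ μ k) (hμ1 : HasSum μ 1)
    (hmean : HasSum (fun k : ℕ ↦ k * μ k) 1) (s : ℝ) :
    ∫ k, ((k : ℝ) - 1) / s ∂offspringLaw μ = 0 := by
  refine integral_offspringLaw hμ0 ?_
  have hsum := (hmean.sub hμ1).div_const s
  rw [sub_self, zero_div] at hsum
  exact hsum.congr_fun fun k ↦ by ring

theorem integral_standardized_sq_offspringLaw (hμ0 : ∀ k, 0 ≤ μ k) (hμ1 : HasSum μ 1)
    (hmean : HasSum (fun k : ℕ ↦ k * μ k) 1)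
    (hvar : HasSum (fun k : ℕ ↦ (k : ℝ) ^ 2 * μ k) (σ2 + 1)) (hσ : 0 < σ2) :
    ∫ k, (((k : ℝ) - 1) / √σ2) ^ 2 ∂offspringLaw μ = 1 := by
  refine integral_offspringLaw hμ0 ?_
  have hsum := ((hvar.sub (hmean.mul_left 2)).add hμ1).div_const σ2
  have hone : (σ2 + 1 - 2 * 1 + 1) / σ2 = 1 := by field_simp; ring
  rw [hone] at hsum
  exact hsum.congr_fun fun k ↦ by rw [div_pow, Real.sq_sqrt hσ.le]; ring

end Criticality

theorem sum_sub_one_div_eq_iff {n : ℕ} {x : ℕ → ℕ} {s : ℝ} (hs : s ≠ 0) :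
    ∑ i ∈ Finset.range n, ((x i : ℝ) - 1) / s = -1 / s ↔ ∑ i ∈ Finset.range n, x i + 1 = n := by
  rw [← Finset.sum_div, div_left_inj' hs, Finset.sum_sub_distrib, ← Nat.cast_inj (R := ℝ)]
  push_cast
  simp only [Finset.sum_const, Finset.card_range, nsmul_eq_mul, mul_one]
  constructor <;> intro h <;> linarith

theorem tendsto_sqrt_mul_natCast_mul_treeProb {μ : ℕ → ℝ} {σ2 : ℝ} {d : ℕ}
    (hμ0 : ∀ k, 0 ≤ μ k) (hμ1 : HasSum μ 1)
    (hmean : HasSum (fun k : ℕ ↦ k * μ k) 1)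
    (hvar : HasSum (fun k : ℕ ↦ (k : ℝ) ^ 2 * μ k) (σ2 + 1)) (hσ : 0 < σ2) (hd_pos : 0 < d)
    (hd_div : ∀ k, 1 ≤ k → μ k ≠ 0 → d ∣ k)
    (hd_gcd : ∀ e : ℕ, (∀ k, 1 ≤ k → μ k ≠ 0 → e ∣ k) → e ∣ d) :
    Tendsto (fun n : ℕ ↦ √n / (d / √σ2) * (n * treeProb μ n))
      (atTop ⊓ 𝓟 {n | treeProb μ n ≠ 0}) (𝓝 (√(2 * π))⁻¹) := by
  have := isProbabilityMeasure_offspringLaw hμ0 hμ1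
  obtain ⟨Ω, _, P, ξ, hξ, hlaw, hindep, _⟩ := exists_iid ℕ (offspringLaw μ)
  have hs : 0 < √σ2 := Real.sqrt_pos.2 hσ
  set step : ℕ → ℝ := fun k ↦ (k - 1) / √σ2
  have hstep : Measurable step := by fun_prop
  have hlaw_real (i k : ℕ) : P.real {ω | ξ i ω = k} = μ k :=
    ((hlaw i).measureReal_eq (measurableSet_singleton k)).trans (offspringLaw_real_singleton hμ0 k)
  have h0 : P[step ∘ ξ 0] = 0 := by
    rw [(hlaw 0).integral_comp hstep.aestronglyMeasurable]
    exact integral_standardized_offspringLaw hμ0 hμ1 hmean _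
  have h1 : P[(step ∘ ξ 0) ^ 2] = 1 := by
    have hsq : Measurable (step ^ 2) := hstep.pow_const 2
    exact ((hlaw 0).integral_comp hsq.aestronglyMeasurable).trans
      (integral_standardized_sq_offspringLaw hμ0 hμ1 hmean hvar hσ)
  have hspan : HasSpan (P.map (step ∘ ξ 0)) (-1 / √σ2) (d / √σ2) := by
    rw [← Measure.map_map hstep (hξ 0), (hlaw 0).map_eq]
    exact hasSpan_map_offspringLaw hμ0 (apply_zero_ne_zero_of_critical hμ0 hμ1 hmean hvar hσ)
      hd_pos hd_div hd_gcd hs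
  have hident (i : ℕ) : IdentDistrib (step ∘ ξ i) (step ∘ ξ 0) P P :=
    ((hlaw i).identDistrib (hlaw 0)).comp hstep
  have hreturn (n : ℕ) : P.real {ω | ∑ i ∈ Finset.range n, (step ∘ ξ i) ω = -1 / √σ2} =
      n * treeProb μ n := by
    rw [natCast_mul_treeProb hξ hindep hlaw_real]
    simp only [step, Function.comp_apply, sum_sub_one_div_eq_iff hs.ne']
  have hlimit := tendsto_sqrt_div_mul_real_sum_eq h0 h1 (hindep.comp (fun _ ↦ step) fun _ ↦ hstep)
    hident hspan (-1 / √σ2)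
  simp only [hreturn] at hlimit
  refine hlimit.mono_left (inf_le_inf_left _ (principal_mono.2 fun n hn ↦ ?_))
  have hn0 : n ≠ 0 := by
    rintro rfl
    exact hn (PlaneTree.treeProb_zero μ)
  exact mul_ne_zero (mod_cast hn0) hn

theorem hasSum_mul_sum_range {μ : ℕ → ℝ} {K : ℕ} (hsupp : ∀ k, K < k → μ k = 0) (f : ℕ → ℝ) :
    HasSum (fun k ↦ f k * μ k) (∑ k ∈ Finset.range (K + 1), f k * μ k) :=
  hasSum_sum_of_ne_finset_zero fun k hk ↦ by
    rw [hsupp k (by simpa using hk), mul_zero]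

theorem gw_total_progeny_asymptotics_general {μ : ℕ → ℝ} {σ2 : ℝ} {d : ℕ}
    (hμ0 : ∀ k, 0 ≤ μ k) (hμ1 : HasSum μ 1)
    (hmean : HasSum (fun k : ℕ ↦ k * μ k) 1)
    (hvar : HasSum (fun k : ℕ ↦ (k : ℝ) ^ 2 * μ k) (σ2 + 1)) (hσ : 0 < σ2) (hd_pos : 0 < d)
    (hd_div : ∀ k, 1 ≤ k → μ k ≠ 0 → d ∣ k)
    (hd_gcd : ∀ e : ℕ, (∀ k, 1 ≤ k → μ k ≠ 0 → e ∣ k) → e ∣ d) :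
    ∀ ε : ℝ, 0 < ε → ∃ N : ℕ, ∀ n : ℕ, N ≤ n → treeProb μ n ≠ 0 →
      |treeProb μ n /
          ((d : ℝ) * (n : ℝ) ^ (-(3:ℝ)/2) / (Real.sqrt σ2 * Real.sqrt (2 * Real.pi))) - 1|
        < ε := by
  have hlim := (tendsto_sqrt_mul_natCast_mul_treeProb hμ0 hμ1 hmean hvar hσ hd_pos hd_div
    hd_gcd).mul_const (√(2 * π))
  rw [inv_mul_cancel₀ (by positivity)] at hlim
  have hratio (n : ℕ) : √n / (d / √σ2) * (n * treeProb μ n) * √(2 * π) =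
      treeProb μ n / (d * (n : ℝ) ^ (-(3:ℝ)/2) / (√σ2 * √(2 * π))) := by
    have hpow : (n : ℝ) ^ (-(3 : ℝ) / 2) = (n * √n)⁻¹ := by
      rw [Real.sqrt_eq_rpow, ← Real.rpow_one_add' n.cast_nonneg (by norm_num),
        ← Real.rpow_neg n.cast_nonneg]
      norm_num
    rw [hpow]
    simp only [div_eq_mul_inv, mul_inv_rev, inv_inv]
    ring
  simp only [hratio, Metric.tendsto_nhds, eventually_inf_principal, eventually_atTop] at hlim
  exact hlim

/-- For a nondegenerate critical offspring distribution `μ` with bounded support,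
nonzero variance `σ²` and span `d`, one has `P(|T| = n) ∼ d n^{-3/2}/(σ√(2π))`
as `n → ∞` along integers with `P(|T| = n) > 0`. -/
theorem gw_total_progeny_asymptotics (μ : ℕ → ℝ) (K : ℕ) (σ2 : ℝ) (d : ℕ)
    (hμ0 : ∀ k, 0 ≤ μ k)
    (hsupp : ∀ k, K < k → μ k = 0)
    (hμ1 : ∑ k ∈ Finset.range (K + 1), μ k = 1)
    (hmean : ∑ k ∈ Finset.range (K + 1), (k : ℝ) * μ k = 1)
    (hvar : σ2 = ∑ k ∈ Finset.range (K + 1), (k : ℝ) ^ 2 * μ k - 1)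
    (hσpos : 0 < σ2)
    (hnd : μ 0 + μ 1 ≠ 1)
    (hd_pos : 0 < d)
    (hd_div : ∀ k, 1 ≤ k → μ k ≠ 0 → d ∣ k)
    (hd_gcd : ∀ e : ℕ, (∀ k, 1 ≤ k → μ k ≠ 0 → e ∣ k) → e ∣ d) :
    ∀ ε : ℝ, 0 < ε → ∃ N : ℕ, ∀ n : ℕ, N ≤ n → treeProb μ n ≠ 0 →
      |treeProb μ n /
          ((d : ℝ) * (n : ℝ) ^ (-(3:ℝ)/2) / (Real.sqrt σ2 * Real.sqrt (2 * Real.pi))) - 1|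
        < ε :=
  gw_total_progeny_asymptotics_general hμ0 (by simpa [hμ1] using hasSum_mul_sum_range hsupp 1)
    (by simpa [hmean] using hasSum_mul_sum_range hsupp (fun k ↦ k))
    (by simpa [hvar] using hasSum_mul_sum_range hsupp (fun k ↦ (k : ℝ) ^ 2))
    hσpos hd_pos hd_div hd_gcd
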